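/- Let X, Y, Z denote the 2×2 Pauli matrices, I the 2×2 identity, ⊗ the Kronecker product, g₁ = X⊗Z⊗Z⊗X⊗I, g₂ = I⊗X⊗Z⊗Z⊗X, g₃ = X⊗I⊗X⊗Z⊗Z, g₄ = Z⊗X⊗I⊗X⊗Z, Z̄ = Z⊗Z⊗Z⊗Z⊗Z, and let v ∈ (ℂ²)^⊗5 be a unit vector with gᵢ v = v for i = 1,…,4 and Z̄ v = v (a logical-zero state of the five-qubit code). Then for every 2×2 complex matrix M and every operator Q of the form Q = Z_i (some i ∈ {2,3,4,5}) or Q = Z_i·Z_j (2 ≤ i < j ≤ 5), where Z_i is the 5-fold Kronecker product with Z in the i-th factor and I elsewhere, one has ⟨v, (M⊗I⊗I⊗I⊗I)·Q·v⟩ = 0. Equivalently, the partial trace over qubits 2–5 of Q·|v⟩⟨v| is the zero operator on the first qubit. -/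

import Mathlib

open Matrix

noncomputable section

/-- Pauli X. -/
def pX : Matrix (Fin 2) (Fin 2) ℂ := !![0, 1; 1, 0]
/-- Pauli Y. -/
def pY : Matrix (Fin 2) (Fin 2) ℂ := !![0, -Complex.I; Complex.I, 0]
/-- Pauli Z. -/
def pZ : Matrix (Fin 2) (Fin 2) ℂ := !![1, 0; 0, -1]

/-- The 5-fold tensor (Kronecker) product `P₁ ⊗ P₂ ⊗ P₃ ⊗ P₄ ⊗ P₅`, realized as a
`32 × 32` matrix on `(ℂ²)^⊗5` with index set `Fin 5 → Fin 2`. -/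
def tp5 (P : Fin 5 → Matrix (Fin 2) (Fin 2) ℂ) :
    Matrix (Fin 5 → Fin 2) (Fin 5 → Fin 2) ℂ :=
  fun x y => ∏ i, P i (x i) (y i)

/-- The four stabilizer generators of the five-qubit perfect code. -/
def gs : Fin 4 → Matrix (Fin 5 → Fin 2) (Fin 5 → Fin 2) ℂ :=
  ![tp5 ![pX, pZ, pZ, pX, 1], tp5 ![1, pX, pZ, pZ, pX],
    tp5 ![pX, 1, pX, pZ, pZ], tp5 ![pZ, pX, 1, pX, pZ]]

/-- The logical operator `Z̄ = Z⊗Z⊗Z⊗Z⊗Z`. -/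
def Zbar : Matrix (Fin 5 → Fin 2) (Fin 5 → Fin 2) ℂ := tp5 ![pZ, pZ, pZ, pZ, pZ]

/-- Pauli `Z` acting on the `i`-th qubit (0-indexed) and the identity elsewhere. -/
def Zon (i : Fin 5) : Matrix (Fin 5 → Fin 2) (Fin 5 → Fin 2) ℂ :=
  tp5 (fun j => if j = i then pZ else 1)

lemma tp5_mul (A B : Fin 5 → Matrix (Fin 2) (Fin 2) ℂ) :
    tp5 A * tp5 B = tp5 (fun i => A i * B i) := by
  ext x y
  simp only [tp5, Matrix.mul_apply]
  rw [Finset.prod_univ_sum, Fintype.piFinset_univ]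
  simp only [Finset.prod_mul_distrib]

lemma tp5_smul (s : Fin 5 → ℂ) (A : Fin 5 → Matrix (Fin 2) (Fin 2) ℂ) :
    tp5 (fun i => s i • A i) = (∏ i, s i) • tp5 A := by
  ext x y
  simp [tp5, Finset.prod_mul_distrib]

/-- Single-qubit Pauli matrices indexed by `0,1,2,3`. -/
def pauli : Fin 4 → Matrix (Fin 2) (Fin 2) ℂ := ![1, pX, pY, pZ]

/-- Commutation sign of two Pauli matrices. -/
def sgn4 (a b : Fin 4) : ℤ := if a = 0 ∨ b = 0 ∨ a = b then 1 else -1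

lemma pauli_comm (a b : Fin 4) :
    pauli a * pauli b = ((sgn4 a b : ℤ) : ℂ) • (pauli b * pauli a) := by
  fin_cases a <;> fin_cases b <;>
    simp [pauli, sgn4, pX, pY, pZ, Matrix.mul_fin_two]

lemma pauli_herm (a : Fin 4) : (pauli a)ᴴ = pauli a := by
  fin_cases a
  · simp [pauli]
  all_goals
    ext i j
    fin_cases i <;> fin_cases j <;> simp [pauli, pX, pY, pZ]

lemma tp5_herm (a : Fin 5 → Fin 4) :
    (tp5 (fun i => pauli (a i)))ᴴ = tp5 (fun i => pauli (a i)) := by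
  ext x y
  simp only [tp5, Matrix.conjTranspose_apply, star_prod]
  refine Finset.prod_congr rfl fun i _ => ?_
  rw [← Matrix.conjTranspose_apply, pauli_herm]

lemma expect_zero (v : (Fin 5 → Fin 2) → ℂ) (a b : Fin 5 → Fin 4)
    (hv : (tp5 (fun i => pauli (a i))).mulVec v = v)
    (hs : ∏ i, sgn4 (a i) (b i) = -1) :
    star v ⬝ᵥ (tp5 (fun i => pauli (b i))).mulVec v = 0 := by
  set S := tp5 (fun i => pauli (a i)) with hS
  set T := tp5 (fun i => pauli (b i)) with hT
  have hc : S * T = -(T * S) := by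
    rw [hS, hT, tp5_mul, tp5_mul]
    simp only [pauli_comm (a _) (b _)]
    rw [tp5_smul, ← Int.cast_prod, hs]
    simp
  have h1 : star v ᵥ* S = star v := by
    have := congrArg star hv
    rwa [Matrix.star_mulVec, hS, tp5_herm] at this
  have h2 : star v ⬝ᵥ T *ᵥ v = -(star v ⬝ᵥ T *ᵥ v) := by
    calc star v ⬝ᵥ T *ᵥ v = (star v ᵥ* S) ⬝ᵥ T *ᵥ v := by rw [h1]
      _ = star v ⬝ᵥ (S * T) *ᵥ v := by
        rw [← Matrix.dotProduct_mulVec, Matrix.mulVec_mulVec]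
      _ = -(star v ⬝ᵥ T *ᵥ (S *ᵥ v)) := by
        rw [hc, Matrix.neg_mulVec, dotProduct_neg, Matrix.mulVec_mulVec]
      _ = _ := by rw [hv]
  exact self_eq_neg.mp h2

/-- Generators (including the logical `Z`) as Pauli strings. -/
def gen : Fin 5 → Fin 5 → Fin 4 :=
  ![![1, 3, 3, 1, 0], ![0, 1, 3, 3, 1], ![1, 0, 1, 3, 3], ![3, 1, 0, 1, 3], ![3, 3, 3, 3, 3]]

/-- The Pauli string with `p` on qubit `0`, and `Z` on qubits `i`, `j`. -/
def str (p : Fin 4) (i j : Fin 5) : Fin 5 → Fin 4 :=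
  fun k => if k = 0 then p else if k = i ∨ k = j then 3 else 0

lemma exists_anti : ∀ (p : Fin 4) (i j : Fin 5), i ≠ 0 → j ≠ 0 →
    ∃ k, ∏ l, sgn4 (gen k l) (str p i j l) = -1 := by
  decide +kernel

lemma gen_fix (v : (Fin 5 → Fin 2) → ℂ)
    (hstab : ∀ i : Fin 4, (gs i).mulVec v = v) (hZ : Zbar.mulVec v = v) (k : Fin 5) :
    (tp5 (fun i => pauli (gen k i))).mulVec v = v := by
  have e : ∀ A : Fin 5 → Matrix (Fin 2) (Fin 2) ℂ, (tp5 A).mulVec v = v →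
      (fun i => pauli (gen k i)) = A → (tp5 (fun i => pauli (gen k i))).mulVec v = v := by
    rintro A h rfl
    exact h
  fin_cases k
  · exact e _ (hstab 0) (by ext i : 1; fin_cases i <;> rfl)
  · exact e _ (hstab 1) (by ext i : 1; fin_cases i <;> rfl)
  · exact e _ (hstab 2) (by ext i : 1; fin_cases i <;> rfl)
  · exact e _ (hstab 3) (by ext i : 1; fin_cases i <;> rfl)
  · exact e _ hZ (by ext i : 1; fin_cases i <;> rfl)

lemma pauli_decomp (M : Matrix (Fin 2) (Fin 2) ℂ) :
    ∃ c : Fin 4 → ℂ, M = ∑ p, c p • pauli p := by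
  refine ⟨![(M 0 0 + M 1 1) / 2, (M 0 1 + M 1 0) / 2, Complex.I * (M 0 1 - M 1 0) / 2,
    (M 0 0 - M 1 1) / 2], ?_⟩
  ext i j
  fin_cases i <;> fin_cases j <;>
    simp [Fin.sum_univ_four, pauli, pX, pY, pZ] <;> ring_nf <;> simp <;> ring

lemma expect_general (v : (Fin 5 → Fin 2) → ℂ)
    (hstab : ∀ i : Fin 4, (gs i).mulVec v = v) (hZ : Zbar.mulVec v = v)
    (M : Matrix (Fin 2) (Fin 2) ℂ) (i j : Fin 5) (hi : i ≠ 0) (hj : j ≠ 0) :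
    star v ⬝ᵥ (tp5 (fun k => if k = 0 then M else if k = i ∨ k = j then pZ else 1)).mulVec v
      = 0 := by
  obtain ⟨c, rfl⟩ := pauli_decomp M
  have key : tp5 (fun k => if k = 0 then ∑ p, c p • pauli p
      else if k = i ∨ k = j then pZ else 1)
      = ∑ p, c p • tp5 (fun k => pauli (str p i j k)) := by
    ext x y
    simp only [tp5, Matrix.sum_apply, Matrix.smul_apply, Fin.prod_univ_succ (n := 4), str,
      if_true, Fin.succ_ne_zero, if_false, apply_ite pauli, smul_eq_mul, Finset.sum_mul,
      mul_assoc]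
    rfl
  rw [key, Matrix.sum_mulVec, dotProduct_sum]
  refine Finset.sum_eq_zero fun p _ => ?_
  obtain ⟨k, hk⟩ := exists_anti p i j hi hj
  rw [Matrix.smul_mulVec, dotProduct_smul,
    expect_zero v (gen k) (str p i j) (gen_fix v hstab hZ k) hk, smul_zero]

/-- qubits 0-indexed; the paper's sites `2,…,5` are `1,…,4`: for the
logical-zero state `v` of the five-qubit code, every weight-1 or weight-2 `Z`-type
insertion `Q` supported on qubits `2..5` satisfies `⟨v, (M ⊗ I⊗I⊗I⊗I) Q v⟩ = 0` for
all `2×2` matrices `M`; i.e. the one-qubit marginal of `Q·|v⟩⟨v|` vanishes. -/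
theorem stmt7 (v : (Fin 5 → Fin 2) → ℂ) (hnorm : star v ⬝ᵥ v = 1)
    (hstab : ∀ i : Fin 4, (gs i).mulVec v = v) (hZ : Zbar.mulVec v = v) :
    ∀ (M : Matrix (Fin 2) (Fin 2) ℂ)
      (Q : Matrix (Fin 5 → Fin 2) (Fin 5 → Fin 2) ℂ),
      ((∃ i : Fin 5, i ≠ 0 ∧ Q = Zon i)
        ∨ (∃ i j : Fin 5, 0 < i ∧ i < j ∧ Q = Zon i * Zon j)) →
      star v ⬝ᵥ (tp5 (fun k => if k = 0 then M else 1) * Q).mulVec v = 0 := by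
  intro M Q hQ
  rcases hQ with ⟨i, hi, rfl⟩ | ⟨i, j, hi, hij, rfl⟩
  · rw [Zon, tp5_mul, ← expect_general v hstab hZ M i i hi hi]
    congr 3
    ext k : 1
    by_cases h0 : k = 0
    · subst h0
      simp [hi.symm]
    · simp [h0]
  · have hi0 : i ≠ 0 := hi.ne'
    have hj0 : j ≠ 0 := (hi.trans hij).ne'
    rw [Zon, Zon, tp5_mul, tp5_mul, ← expect_general v hstab hZ M i j hi0 hj0]
    congr 3
    ext k : 1
    by_cases h0 : k = 0
    · subst h0
      simp [hi0.symm, hj0.symm]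
    · by_cases h1 : k = i
      · subst h1
        simp [h0, hij.ne]
      · simp [h0, h1]
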